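/- (Performance-difference identity.) For any two policies π and π̃ in a finite-horizon MDP with horizon T, the difference of total expected costs decomposes as a sum over time of expected cost-to-go gaps along the state distribution of π: J(π) = J(π̃) + Σ_{t=1}^{T} E_{x ∼ d_π^t} [ Q_{T−t+1}(x, π, π̃) − Q_{T−t+1}(x, π̃, π̃) ], where Q_k(x, π, π̃) is the expected cost of executing π for one step starting from x and then executing π̃ for the remaining k−1 steps. -/

import Mathlib

/-!
Write `V k = Qpol p c πbar πbar k` for the cost-to-go of `πbar` and `d_π^t = stateDist p π μ₁ t`, with
time counted from `0`. Conditioning on the first step gives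
`E_{d_π^t} Q_{k+1}(·, π, πbar) = E_{d_π^t} E_π c + E_{d_π^{t+1}} V k` (`pmfExp_stateDist_Qpol_succ`),
so the sum of the gaps `E_{d_π^t} [Q_{T-t}(·, π, πbar) - V (T-t)]` telescopes to
`J(π) - E_{μ₁} V T` (`sum_gap_eq`). For `π = πbar` all gaps vanish, which identifies
`E_{μ₁} V T` with `J(πbar)`.
-/

open Finset

/-- Expectation of `f` under a PMF on a finite type. -/
noncomputable def pmfExp {α : Type*} [Fintype α] (P : PMF α) (f : α → ℝ) : ℝ :=
  ∑ a, (P a).toReal * f a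

/-- Total variation distance `TV(P,Q) = (1/2)·Σ_a |P(a) − Q(a)|`. -/
noncomputable def tvDist {α : Type*} [Fintype α] (P Q : PMF α) : ℝ :=
  (1 / 2) * ∑ a, |(P a).toReal - (Q a).toReal|

/-- KL divergence `KL(P‖Q) = Σ_a P(a)·ln(P(a)/Q(a))`, interpreted as `+∞`
if `P` is not absolutely continuous with respect to `Q`. -/
noncomputable def klDivPMF {α : Type*} [Fintype α] (P Q : PMF α) : EReal :=
  if ∀ a, Q a = 0 → P a = 0 then
    (((∑ a, (P a).toReal * Real.log ((P a).toReal / (Q a).toReal)) : ℝ) : EReal)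
  else ⊤

/-- State distribution of the MDP: `stateDist p π μ₁ n` is the distribution `d_π^{n+1}`
of the state at time `n+1` when executing policy `π` from initial distribution `μ₁`,
i.e. `d_π^1 = μ₁` and `d_π^{t+1}(x′) = Σ_{x,u} d_π^t(x)·π(u|x)·p(x′|x,u)`. -/
noncomputable def stateDist {S A : Type*} (p : S → A → PMF S) (π : S → PMF A)
    (μ₁ : PMF S) : ℕ → PMF S
  | 0 => μ₁
  | n + 1 => (stateDist p π μ₁ n).bind fun x => (π x).bind fun u => p x u

/-- Total expected cost `J(π) = Σ_{t=1}^T E_{x∼d_π^t} E_{u∼π(x)}[c(x,u)]`. -/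
noncomputable def totalCost {S A : Type*} [Fintype S] [Fintype A] (p : S → A → PMF S)
    (c : S → A → ℝ) (μ₁ : PMF S) (T : ℕ) (π : S → PMF A) : ℝ :=
  ∑ t ∈ Finset.range T,
    pmfExp (stateDist p π μ₁ t) fun x => pmfExp (π x) fun u => c x u

/-- Action-conditioned cost-to-go: `Qact p c π̄ t x u` is the expected sum of costs
over `t` steps obtained by taking action `u` in state `x` and thereafter following
`π̄` for the remaining `t−1` steps. -/
noncomputable def Qact {S A : Type*} [Fintype S] [Fintype A] (p : S → A → PMF S)
    (c : S → A → ℝ) (πbar : S → PMF A) : ℕ → S → A → ℝ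
  | 0, _, _ => 0
  | t + 1, x, u =>
      c x u + pmfExp (p x u) fun x' => pmfExp (πbar x') fun u' => Qact p c πbar t x' u'

/-- `Qpol p c π π̄ t x = Q_t(x, π, π̄)`: expected cost of sampling the first action
from `π(x)` and following `π̄` for the remaining `t−1` steps. -/
noncomputable def Qpol {S A : Type*} [Fintype S] [Fintype A] (p : S → A → PMF S)
    (c : S → A → ℝ) (π πbar : S → PMF A) (t : ℕ) (x : S) : ℝ :=
  pmfExp (π x) fun u => Qact p c πbar t x u

lemma pmfExp_add {α : Type*} [Fintype α] (P : PMF α) (f g : α → ℝ) :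
    pmfExp P (fun a => f a + g a) = pmfExp P f + pmfExp P g := by
  simp only [pmfExp, mul_add, Finset.sum_add_distrib]

lemma pmfExp_sub {α : Type*} [Fintype α] (P : PMF α) (f g : α → ℝ) :
    pmfExp P (fun a => f a - g a) = pmfExp P f - pmfExp P g := by
  simp only [pmfExp, mul_sub, Finset.sum_sub_distrib]

lemma pmfExp_zero {α : Type*} [Fintype α] (P : PMF α) :
    pmfExp P (fun _ => (0 : ℝ)) = 0 := by
  simp [pmfExp]

/-- The law of total expectation. -/
lemma pmfExp_bind {α β : Type*} [Fintype α] [Fintype β] (P : PMF α) (K : α → PMF β)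
    (f : β → ℝ) : pmfExp (P.bind K) f = pmfExp P fun a => pmfExp (K a) f := by
  have h : ∀ b, ((P.bind K) b).toReal = ∑ a, (P a).toReal * (K a b).toReal := by
    intro b
    rw [PMF.bind_apply, tsum_fintype, ENNReal.toReal_sum
      (fun a _ => ENNReal.mul_ne_top (P.apply_ne_top a) ((K a).apply_ne_top b))]
    simp only [ENNReal.toReal_mul]
  simp only [pmfExp, h, Finset.sum_mul, Finset.mul_sum]
  rw [Finset.sum_comm]
  simp only [mul_assoc]

/-- Bellman recursion averaged over the state distribution of `π`: after the first action,
drawn from `π`, the state is distributed as `stateDist p π μ₁ (t + 1)`. -/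
lemma pmfExp_stateDist_Qpol_succ {S A : Type*} [Fintype S] [Fintype A]
    (μ₁ : PMF S) (p : S → A → PMF S) (c : S → A → ℝ) (π πbar : S → PMF A) (t k : ℕ) :
    pmfExp (stateDist p π μ₁ t) (Qpol p c π πbar (k + 1))
      = pmfExp (stateDist p π μ₁ t) (fun x => pmfExp (π x) fun u => c x u)
        + pmfExp (stateDist p π μ₁ (t + 1)) (Qpol p c πbar πbar k) := by
  rw [stateDist, pmfExp_bind, ← pmfExp_add]
  congr 1
  funext x
  rw [pmfExp_bind, ← pmfExp_add]
  rfl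

lemma sum_gap_eq {S A : Type*} [Fintype S] [Fintype A]
    (T : ℕ) (μ₁ : PMF S) (p : S → A → PMF S) (c : S → A → ℝ) (π πbar : S → PMF A) :
    ∑ t ∈ Finset.range T, pmfExp (stateDist p π μ₁ t)
        (fun x => Qpol p c π πbar (T - t) x - Qpol p c πbar πbar (T - t) x)
      = totalCost p c μ₁ T π - pmfExp μ₁ (Qpol p c πbar πbar T) := by
  let F : ℕ → ℝ := fun t => pmfExp (stateDist p π μ₁ t) (Qpol p c πbar πbar (T - t))
  have hstep : ∀ t ∈ Finset.range T, pmfExp (stateDist p π μ₁ t)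
        (fun x => Qpol p c π πbar (T - t) x - Qpol p c πbar πbar (T - t) x)
      = pmfExp (stateDist p π μ₁ t) (fun x => pmfExp (π x) fun u => c x u)
        + (F (t + 1) - F t) := by
    intro t ht
    have hk : T - t = (T - (t + 1)) + 1 := by
      have := Finset.mem_range.mp ht
      omega
    have h := pmfExp_stateDist_Qpol_succ μ₁ p c π πbar t (T - (t + 1))
    rw [← hk] at h
    rw [pmfExp_sub, h]
    simp only [F]
    ring
  -- no cost remains to be paid at the end of the horizon
  have hT : F T = 0 := by
    simp [F, Qpol, Qact, pmfExp]
  have h0 : F 0 = pmfExp μ₁ (Qpol p c πbar πbar T) := rfl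
  rw [Finset.sum_congr rfl hstep, Finset.sum_add_distrib, Finset.sum_range_sub, hT, h0, totalCost]
  ring

/-- **Performance-difference identity.** For any two policies `π`, `π̃`,
`J(π) = J(π̃) + Σ_{t=1}^{T} E_{x ∼ d_π^t}[Q_{T−t+1}(x,π,π̃) − Q_{T−t+1}(x,π̃,π̃)]`.
Here the sum over `t ∈ {1,…,T}` is written as a sum over `t ∈ range T`
(so `t` below is the time minus one, `d_π^{t+1} = stateDist p π μ₁ t`, and
`T − t` below equals `T − (t+1) + 1`). -/
theorem performance_difference {S A : Type*} [Fintype S] [Fintype A]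
    (T : ℕ) (μ₁ : PMF S) (p : S → A → PMF S) (c : S → A → ℝ)
    (hc : ∀ x u, c x u ∈ Set.Icc (0 : ℝ) 1)
    (π πbar : S → PMF A) :
    totalCost p c μ₁ T π = totalCost p c μ₁ T πbar
      + ∑ t ∈ Finset.range T,
          pmfExp (stateDist p π μ₁ t)
            (fun x => Qpol p c π πbar (T - t) x - Qpol p c πbar πbar (T - t) x) := by
  -- for `π = πbar` every gap is zero
  have hbar := sum_gap_eq T μ₁ p c πbar πbar
  simp only [sub_self, pmfExp_zero, Finset.sum_const_zero] at hbar
  rw [sum_gap_eq]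
  linarith
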